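/- arXiv:1903.02952 — 3 statements merged into one kernel-verified Lean document; each statement's English description precedes it below -/
import Mathlib

section
/- Let R = ℂ[∂]x be a Leibniz conformal algebra that is a free ℂ[∂]-module of rank 1 generated by x. Then either R is abelian (i.e. [x_λ x] = 0) or R is isomorphic to the Virasoro Lie conformal algebra, i.e. [x_λ x] = (∂ + 2λ)x. -/
noncomputable section

/-- `g : ℂ → R` is (the evaluation of) a polynomial in `λ` with coefficients in `R`,
i.e. an element of `R[λ]`. -/
def IsPolyFun {R : Type*} [AddCommGroup R] [Module ℂ R] (g : ℂ → R) : Prop :=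
  ∃ (N : ℕ) (c : ℕ → R), ∀ l : ℂ, g l = ∑ i ∈ Finset.range N, l ^ i • c i

/-- A conformal bilinear map `U × V → W[λ]`, in evaluated form: `f_λ(∂u, v) = -λ f_λ(u,v)`
and `f_λ(u, ∂v) = (∂ + λ) f_λ(u,v)`. -/
structure IsConformalBilin {U V W : Type*}
    [AddCommGroup U] [Module ℂ U] [AddCommGroup V] [Module ℂ V]
    [AddCommGroup W] [Module ℂ W]
    (DU : Module.End ℂ U) (DV : Module.End ℂ V) (DW : Module.End ℂ W)
    (f : ℂ → U → V → W) : Prop where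
  add_left : ∀ (l : ℂ) (a a' : U) (b : V), f l (a + a') b = f l a b + f l a' b
  smul_left : ∀ (l c : ℂ) (a : U) (b : V), f l (c • a) b = c • f l a b
  add_right : ∀ (l : ℂ) (a : U) (b b' : V), f l a (b + b') = f l a b + f l a b'
  smul_right : ∀ (l c : ℂ) (a : U) (b : V), f l a (c • b) = c • f l a b
  poly : ∀ (a : U) (b : V), IsPolyFun (fun l => f l a b)
  conf_left : ∀ (l : ℂ) (a : U) (b : V), f l (DU a) b = (-l) • f l a b
  conf_right : ∀ (l : ℂ) (a : U) (b : V), f l a (DV b) = DW (f l a b) + l • f l a b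

/-- A Leibniz conformal algebra structure on the `ℂ[∂]`-module `(R, D)`:
a conformal bilinear `λ`-bracket satisfying the Jacobi identity. -/
structure IsLeibnizConformal {R : Type*} [AddCommGroup R] [Module ℂ R]
    (D : Module.End ℂ R) (br : ℂ → R → R → R) : Prop where
  bilin : IsConformalBilin D D D br
  jacobi : ∀ (l m : ℂ) (a b c : R),
    br l a (br m b c) = br (l + m) (br l a b) c + br m b (br l a c)

open Polynomial

/-! Write `[x_λ x] = F(∂, λ) x`. By sesquilinearity and freeness, the Jacobi identity for `x, x, x`
reads `F(∂+λ, μ) F(∂, λ) - F(∂+μ, λ) F(∂, μ) = F(-λ-μ, λ) F(∂, λ+μ)`.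

* If `F` has degree `n` in `∂` with leading coefficient `a(λ)`, the coefficient of `∂ ^ (2n-1)` on
  the left is `n (λ-μ) a(λ) a(μ)`, while the right-hand side has degree at most `n` in `∂`. Hence
  `n ≤ 1`.
* For `λ = μ` the left-hand side vanishes, so `F(-2λ, λ) = 0` unless `F = 0`. Hence
  `F = a(λ) (∂ + 2λ)`.
* For `μ = 0` it follows that `a` is constant, and a nonzero constant is scaled away by rescaling
  `x`. -/

section Taylor

variable {K : Type*} {n : ℕ}

theorem coeff_taylor_of_natDegree_le [Semiring K] {p : K[X]} (r : K) (hp : p.natDegree ≤ n) :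
    (taylor r p).coeff n = p.coeff n := by
  rw [taylor_coeff, eval_eq_sum_range' (n := 1)]
  · simp [hasseDeriv_coeff]
  · exact (natDegree_hasseDeriv_le p n).trans_lt (by lia)

theorem coeff_taylor_of_natDegree_le_succ [CommSemiring K] {p : K[X]} (r : K)
    (hp : p.natDegree ≤ n + 1) :
    (taylor r p).coeff n = p.coeff n + (n + 1) * r * p.coeff (n + 1) := by
  rw [taylor_coeff, eval_eq_sum_range' (n := 2)]
  · simp only [hasseDeriv_coeff, Finset.sum_range_succ, Finset.sum_range_zero, add_comm _ n,
      add_zero, Nat.choose_self, Nat.choose_succ_self_right]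
    push_cast
    ring
  · exact (natDegree_hasseDeriv_le p n).trans_lt (by lia)

theorem natDegree_taylor_sub_self_le [Ring K] {p : K[X]} (r : K) (hp : p.natDegree ≤ n + 1) :
    (taylor r p - p).natDegree ≤ n := by
  refine natDegree_le_iff_coeff_eq_zero.mpr fun i hi => ?_
  rw [coeff_sub, coeff_taylor_of_natDegree_le r (hp.trans hi), sub_self]

theorem coeff_taylor_mul_sub_taylor_mul [CommRing K] {p q : K[X]} (r s : K)
    (hp : p.natDegree ≤ n + 1) (hq : q.natDegree ≤ n + 1) :
    (taylor r q * p - taylor s p * q).coeff (n + (n + 1)) =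
      (n + 1) * (r - s) * (p.coeff (n + 1) * q.coeff (n + 1)) := by
  have hdiff : taylor r q * p - taylor s p * q = (taylor r q - q) * p - (taylor s p - p) * q := by
    ring
  rw [hdiff, coeff_sub, coeff_mul_add_eq_of_natDegree_le (natDegree_taylor_sub_self_le r hq) hp,
    coeff_mul_add_eq_of_natDegree_le (natDegree_taylor_sub_self_le s hp) hq, coeff_sub, coeff_sub,
    coeff_taylor_of_natDegree_le_succ r hq, coeff_taylor_of_natDegree_le_succ s hp]
  ring

end Taylor

/-- The Jacobi identity for the bracket `[x_λ x] = F(∂, λ) x` on a free module generated by `x`,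
as an identity of polynomials in `∂` for all values `l, m` of `λ, μ`. The polynomial
`F : K[X][X]` is encoded with `∂` as the outer and `λ` as the inner variable, and
`taylor l` is the substitution `∂ ↦ ∂ + l`. -/
def IsJacobiPolynomial {K : Type*} [CommRing K] (F : K[X][X]) : Prop :=
  ∀ l m : K, taylor l (F.map (evalRingHom m)) * F.map (evalRingHom l) =
    C (F.evalEval l (-(l + m))) * F.map (evalRingHom (l + m)) +
      taylor m (F.map (evalRingHom l)) * F.map (evalRingHom m)

namespace IsJacobiPolynomial

variable {K : Type*} [CommRing K] {F : K[X][X]}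

theorem evalEval_eq (hF : IsJacobiPolynomial F) (l m d : K) :
    F.evalEval m (d + l) * F.evalEval l d =
      F.evalEval l (-(l + m)) * F.evalEval (l + m) d + F.evalEval l (d + m) * F.evalEval m d := by
  simpa only [eval_add, eval_mul, eval_C, taylor_eval, map_evalRingHom_eval]
    using congrArg (eval d) (hF l m)

variable [IsDomain K] [CharZero K]

theorem natDegree_le_one (hF : IsJacobiPolynomial F) : F.natDegree ≤ 1 := by
  by_contra! hdeg
  obtain ⟨k, hk⟩ : ∃ k, F.natDegree = (k + 1) + 1 := ⟨F.natDegree - 2, by lia⟩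
  have hmap (l : K) : (F.map (evalRingHom l)).natDegree ≤ (k + 1) + 1 := hk ▸ natDegree_map_le
  have hlead : F.leadingCoeff = F.coeff (k + 1 + 1) := by rw [leadingCoeff, hk]
  have hprod (l m : K) : (l - m) * (F.leadingCoeff.eval l * F.leadingCoeff.eval m) = 0 := by
    have hcoeff := congrArg (coeff · ((k + 1) + (k + 1 + 1))) (sub_eq_of_eq_add (hF l m))
    simp only [coeff_taylor_mul_sub_taylor_mul l m (hmap l) (hmap m), coeff_C_mul,
      coeff_eq_zero_of_natDegree_lt ((hmap (l + m)).trans_lt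
        (by lia : k + 1 + 1 < k + 1 + (k + 1 + 1))),
      mul_zero, coeff_map, coe_evalRingHom, ← hlead, mul_assoc] at hcoeff
    exact (mul_eq_zero.mp hcoeff).resolve_left (by exact_mod_cast (k + 1).succ_ne_zero)
  have hF0 : F.leadingCoeff ≠ 0 := leadingCoeff_ne_zero.mpr (ne_zero_of_natDegree_gt hdeg)
  refine hF0 (Polynomial.funext fun m => ?_)
  have hvanish : (X - C m) * (F.leadingCoeff * C (F.leadingCoeff.eval m)) = 0 :=
    Polynomial.funext fun l => by simpa using hprod l m
  simpa [X_sub_C_ne_zero, hF0] using hvanish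

theorem eval_neg_two_mul_X_eq_zero (hF : IsJacobiPolynomial F) (hF0 : F ≠ 0) :
    F.eval (C (-2) * X) = 0 := by
  have hmul : F.eval (C (-2) * X) * F.leadingCoeff.comp (C 2 * X) = 0 := by
    refine Polynomial.funext fun l => ?_
    have hroot : (F.eval (C (-2) * X)).eval l = F.evalEval l (-(l + l)) := by
      rw [← coe_evalRingHom, ← eval₂_at_apply, eval₂_evalRingHom, coe_evalRingHom, eval_mul,
        eval_C, eval_X, neg_mul, two_mul]
    have hzero : C (F.evalEval l (-(l + l))) * F.map (evalRingHom (l + l)) = 0 :=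
      right_eq_add.mp (hF l l)
    have hcoeff := congrArg (coeff · F.natDegree) hzero
    simp only [coeff_C_mul, coeff_map, coe_evalRingHom, coeff_natDegree, coeff_zero] at hcoeff
    rwa [eval_mul, hroot, eval_comp, eval_mul, eval_C, eval_X, two_mul, eval_zero]
  have hcomp : F.leadingCoeff.comp (C 2 * X) ≠ 0 := by
    rwa [Ne, comp_C_mul_X_eq_zero_iff (mem_nonZeroDivisors_of_ne_zero two_ne_zero),
      leadingCoeff_eq_zero]
  exact (mul_eq_zero.mp hmul).resolve_right hcomp

theorem exists_eq_C_mul_X_add_two_mul (hF : IsJacobiPolynomial F) :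
    ∃ a : K[X], F = C a * (X + C (2 * X)) := by
  rcases eq_or_ne F 0 with rfl | hF0
  · exact ⟨0, by simp⟩
  obtain ⟨a, b, rfl⟩ := exists_eq_X_add_C_of_natDegree_le_one hF.natDegree_le_one
  have hb : b = a * (2 * X) := by
    have hroot := hF.eval_neg_two_mul_X_eq_zero hF0
    simp only [eval_add, eval_mul, eval_C, eval_X, C_neg, C_ofNat] at hroot
    linear_combination hroot
  exact ⟨a, by rw [hb, C_mul, mul_add]⟩

theorem eq_C_eval_zero {a : K[X]} (ha : IsJacobiPolynomial (C a * (X + C (2 * X)))) :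
    a = C (a.eval 0) := by
  rcases eq_or_ne a 0 with rfl | ha0
  · simp
  have hmul : X * a * (a - C (a.eval 0)) = 0 := by
    refine Polynomial.funext fun l => ?_
    -- For `μ = 0` every term has the factor `∂ + 2λ`, which is `1` at this value of `∂`.
    have hjac := ha.evalEval_eq l 0 (1 - 2 * l)
    simp only [evalEval_mul, evalEval_add, evalEval_C, evalEval_X, eval_mul, eval_sub, eval_X,
      eval_C, eval_ofNat, eval_zero, add_zero] at hjac ⊢
    linear_combination -hjac
  exact sub_eq_zero.mp ((mul_eq_zero.mp hmul).resolve_left (mul_ne_zero X_ne_zero ha0))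

theorem exists_eq_C_C_mul_X_add_two_mul (hF : IsJacobiPolynomial F) :
    ∃ c : K, F = C (C c) * (X + C (2 * X)) := by
  obtain ⟨a, rfl⟩ := hF.exists_eq_C_mul_X_add_two_mul
  exact ⟨a.eval 0, by rw [← hF.eq_C_eval_zero]⟩

end IsJacobiPolynomial

theorem map_aeval_apply_of_intertwining {K V W : Type*} [CommSemiring K]
    [AddCommMonoid V] [Module K V] [AddCommMonoid W] [Module K W]
    {S : Module.End K V} {T : Module.End K W} (φ : V →ₗ[K] W)
    (hφ : ∀ v, φ (S v) = T (φ v)) (p : K[X]) (v : V) :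
    φ (aeval S p v) = aeval T p (φ v) := by
  induction p using Polynomial.induction_on generalizing v with
  | C c => simp
  | add p q hp hq => simp [hp, hq]
  | monomial n c ih => simpa [pow_succ, hφ] using ih (S v)

namespace IsConformalBilin

variable {U V W : Type*} [AddCommGroup U] [Module ℂ U] [AddCommGroup V] [Module ℂ V]
  [AddCommGroup W] [Module ℂ W] {DU : Module.End ℂ U} {DV : Module.End ℂ V}
  {DW : Module.End ℂ W} {f : ℂ → U → V → W}

theorem aeval_left (hf : IsConformalBilin DU DV DW f) (l : ℂ) (p : ℂ[X]) (u : U) (v : V) :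
    f l (aeval DU p u) v = p.eval (-l) • f l u v := by
  let φ : U →ₗ[ℂ] W := IsLinearMap.mk' (f l · v)
    ⟨fun a b => hf.add_left l a b v, fun c a => hf.smul_left l c a v⟩
  have hφ (a : U) : φ (DU a) = algebraMap ℂ (Module.End ℂ W) (-l) (φ a) := hf.conf_left l a v
  calc f l (aeval DU p u) v
    _ = aeval (algebraMap ℂ (Module.End ℂ W) (-l)) p (f l u v) :=
      map_aeval_apply_of_intertwining φ hφ p u
    _ = p.eval (-l) • f l u v := by
      rw [aeval_algebraMap_apply_eq_algebraMap_eval, Module.algebraMap_end_apply]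

theorem aeval_right (hf : IsConformalBilin DU DV DW f) (l : ℂ) (p : ℂ[X]) (u : U) (v : V) :
    f l u (aeval DV p v) = aeval DW (taylor l p) (f l u v) := by
  let φ : V →ₗ[ℂ] W := IsLinearMap.mk' (f l u)
    ⟨hf.add_right l u, fun c a => hf.smul_right l c u a⟩
  have hφ (b : V) : φ (DV b) = aeval DW (X + C l) (φ b) := by
    simpa [φ] using hf.conf_right l u b
  calc f l u (aeval DV p v)
    _ = aeval (aeval DW (X + C l)) p (f l u v) := map_aeval_apply_of_intertwining φ hφ p v
    _ = aeval DW (taylor l p) (f l u v) := by rw [taylor_apply, aeval_comp]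

theorem eq_zero_of_generators (hf : IsConformalBilin DU DV DW f) {l : ℂ} {u : U} {v : V}
    (hu : ∀ a : U, ∃ p : ℂ[X], aeval DU p u = a) (hv : ∀ b : V, ∃ q : ℂ[X], aeval DV q v = b)
    (huv : f l u v = 0) (a : U) (b : V) : f l a b = 0 := by
  obtain ⟨p, rfl⟩ := hu a
  obtain ⟨q, rfl⟩ := hv b
  rw [hf.aeval_left, hf.aeval_right, huv, map_zero, smul_zero]

end IsConformalBilin

section CyclicModule

variable {R : Type*} [AddCommGroup R] [Module ℂ R] {D : Module.End ℂ R} {x : R}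

theorem IsPolyFun.exists_eq_aeval_map_evalRingHom {g : ℂ → R} (hg : IsPolyFun g)
    (hx : ∀ a : R, ∃ p : ℂ[X], aeval D p x = a) :
    ∃ F : ℂ[X][X], ∀ l, g l = aeval D (F.map (evalRingHom l)) x := by
  obtain ⟨N, c, hc⟩ := hg
  choose q hq using fun i => hx (c i)
  have hspec (l : ℂ) (i : ℕ) :
      (C (X ^ i) * (q i).map C).map (evalRingHom l) = C (l ^ i) * q i := by
    have hid : (evalRingHom l).comp C = RingHom.id ℂ := by ext; simp
    simp [Polynomial.map_map, hid]
  refine ⟨∑ i ∈ Finset.range N, C (X ^ i) * (q i).map C, fun l => ?_⟩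
  simp only [hc, Polynomial.map_sum, hspec, map_sum, LinearMap.sum_apply, aeval_mul, aeval_C,
    Module.End.mul_apply, Module.algebraMap_end_apply, hq]

variable {br : ℂ → R → R → R} {F : ℂ[X][X]}

theorem IsLeibnizConformal.isJacobiPolynomial (hbr : IsLeibnizConformal D br)
    (hx : Function.Injective fun p : ℂ[X] => aeval D p x)
    (hF : ∀ l, br l x x = aeval D (F.map (evalRingHom l)) x) : IsJacobiPolynomial F := by
  intro l m
  apply hx
  have hjac := hbr.jacobi l m x x x
  rw [hF m, hF l, hbr.bilin.aeval_right, hbr.bilin.aeval_left, hbr.bilin.aeval_right, hF, hF, hF,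
    map_evalRingHom_eval] at hjac
  simpa only [map_add, aeval_mul, aeval_C, LinearMap.add_apply, Module.End.mul_apply,
    Module.algebraMap_end_apply] using hjac

theorem IsConformalBilin.virasoro_inv_smul (hbr : IsConformalBilin D D D br) {c l : ℂ}
    (hc : c ≠ 0) (hxx : br l x x = c • (D x + (2 * l) • x)) :
    br l (c⁻¹ • x) (c⁻¹ • x) = D (c⁻¹ • x) + (2 * l) • c⁻¹ • x := by
  rw [hbr.smul_left, hbr.smul_right, hxx, inv_smul_smul₀ hc, smul_add, map_smul,
    smul_comm (2 * l)]

end CyclicModule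

/-- A Leibniz conformal algebra `R = ℂ[∂]x` which is a free `ℂ[∂]`-module of
rank 1 generated by `x` is either abelian or isomorphic to the Virasoro Lie conformal
algebra, i.e. it has a (free) generator `y` with `[y_λ y] = (∂ + 2λ) y`. -/
theorem rank_one_leibniz_conformal_abelian_or_virasoro
    {R : Type*} [AddCommGroup R] [Module ℂ R] (D : Module.End ℂ R)
    (br : ℂ → R → R → R) (hLeib : IsLeibnizConformal D br) (x : R)
    (hfree : ∀ a : R, ∃! p : Polynomial ℂ, (Polynomial.aeval D p) x = a) :
    (∀ (l : ℂ) (a b : R), br l a b = 0) ∨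
    ∃ y : R, (∃ c : ℂ, c ≠ 0 ∧ y = c • x) ∧
      ∀ l : ℂ, br l y y = D y + (2 * l) • y := by
  have hgen (a : R) : ∃ p : ℂ[X], aeval D p x = a := (hfree a).exists
  have hinj : Function.Injective fun p : ℂ[X] => aeval D p x :=
    fun _ q hpq => (hfree (aeval D q x)).unique hpq rfl
  obtain ⟨F, hF⟩ := (hLeib.bilin.poly x x).exists_eq_aeval_map_evalRingHom hgen
  obtain ⟨c, rfl⟩ := (hLeib.isJacobiPolynomial hinj hF).exists_eq_C_C_mul_X_add_two_mul
  have hxx (l : ℂ) : br l x x = c • (D x + (2 * l) • x) := by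
    rw [hF, mul_comm 2 l]; simp [mul_smul, ofNat_smul_eq_nsmul]
  rcases eq_or_ne c 0 with rfl | hc
  · exact .inl fun l => hLeib.bilin.eq_zero_of_generators hgen hgen (by rw [hxx, zero_smul])
  · exact .inr ⟨c⁻¹ • x, ⟨c⁻¹, inv_ne_zero hc, rfl⟩,
      fun l => hLeib.bilin.virasoro_inv_smul hc (hxx l)⟩
end
end

section
/- Let R be a Leibniz conformal algebra, Q a ℂ[∂]-module, and Ω(R,Q) = (↼_λ, ⇀_λ, ◁_λ, ▷_λ, f_λ, {·_λ·}) an extending datum of R by Q. Then R♮Q (the ℂ[∂]-module R × Q with bracket [(a,x)_λ (b,y)] = ([a_λ b] + a↼_λ y + x▷_λ b + f_λ(x,y), a⇀_λ y + x◁_λ b + {x_λ y})) is a Leibniz conformal algebra if and only if the following hold for all a,b ∈ R and x,y,z ∈ Q: (L1) [a_λ b]⇀_{λ+μ} x = a⇀_λ(b⇀_μ x) − b⇀_μ(a⇀_λ x); (L2) [a_λ b]↼_{λ+μ} x = [a_λ (b↼_μ x)] + a↼_λ(b⇀_μ x) − [b_μ (a↼_λ x)] − b↼_μ(a⇀_λ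 x); (L3) x◁_μ [a_λ b] = a⇀_λ(x◁_μ b) − (a⇀_λ x)◁_{λ+μ} b; (L4) x▷_μ [a_λ b] = [a_λ (x▷_μ b)] + a↼_λ(x◁_μ b) − [(a↼_λ x)_{λ+μ} b] − (a⇀_λ x)▷_{λ+μ} b; (L5) [(x▷_μ a)_{λ+μ} b] + (x◁_μ a)▷_{λ+μ} b + [(a↼_λ x)_{λ+μ} b] + (a⇀_λ x)▷_{λ+μ} b = 0; (L6) (x◁_μ a)◁_{λ+μ} b + (a⇀_λ x)◁_{λ+μ} b = 0; (L7) a⇀_λ{x_μ y} = {(a⇀_λ x)_{λ+μ} y} + x◁_μ(a↼_λ y) + {x_μ (a⇀_λ y)} + (a↼_λ x)⇀_{λ+μ} y; (L8) a↼_λ{x_μ y} = (a↼_λ x)↼_{λ+μ} y + f_{λ+μ}(a⇀_λ x, y) + x▷_μ(a↼_λ y) + f_μ(x, a⇀_λ y) − [a_λ f_μ(x,y)]; (L9) (x▷_μ a)↼_{λ+μ} y + f_{λ+μ}(x◁_μ a, y) + (a↼_λ x)↼_{λ+μ} y + f_{λ+μ}(a⇀_λ x, y) = 0; (L10) {(a⇀_λ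 x)_{λ+μ} y} + (a↼_λ x)⇀_{λ+μ} y + (x▷_μ a)⇀_{λ+μ} y + {(x◁_μ a)_{λ+μ} y} = 0; (L11) {x_λ y}▷_{λ+μ} a = x▷_λ(y▷_μ a) + f_λ(x, y◁_μ a) − [f_λ(x,y)_{λ+μ} a] − y▷_μ(x▷_λ a) − f_μ(y, x◁_λ a); (L12) {x_λ y}◁_{λ+μ} a = x◁_λ(y▷_μ a) + {x_λ (y◁_μ a)} − y◁_μ(x▷_λ a) − {y_μ (x◁_λ a)}; (L13) x▷_λ f_μ(y,z) = f_λ(x,y)↼_{λ+μ} z + f_{λ+μ}({x_λ y}, z) + y▷_μ f_λ(x,z) + f_μ(y, {x_λ z}) − f_λ(x, {y_μ z}); (L14) x◁_λ f_μ(y,z) = f_λ(x,y)⇀_{λ+μ} z + y◁_μ f_λ(x,z) + {{x_λ y}_{λ+μ} z} + {y_μ {x_λ z}} − {x_λ {y_μ z}}. -/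
noncomputable section

/-- An extending datum `Ω(R,Q) = (↼, ⇀, ◁, ▷, f, {·_λ·})` of a Leibniz conformal algebra
`R` by a `ℂ[∂]`-module `Q`: six conformal bilinear maps.  Here `lh = ↼`, `rh = ⇀`,
`lt = ◁`, `rt = ▷`, `fm = f`, `bq = {·_λ·}`. -/
structure IsExtendingDatum {R Q : Type*}
    [AddCommGroup R] [Module ℂ R] [AddCommGroup Q] [Module ℂ Q]
    (DR : Module.End ℂ R) (DQ : Module.End ℂ Q)
    (lh : ℂ → R → Q → R) (rh : ℂ → R → Q → Q)
    (lt : ℂ → Q → R → Q) (rt : ℂ → Q → R → R)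
    (fm : ℂ → Q → Q → R) (bq : ℂ → Q → Q → Q) : Prop where
  lh_bilin : IsConformalBilin DR DQ DR lh
  rh_bilin : IsConformalBilin DR DQ DQ rh
  lt_bilin : IsConformalBilin DQ DR DQ lt
  rt_bilin : IsConformalBilin DQ DR DR rt
  fm_bilin : IsConformalBilin DQ DQ DR fm
  bq_bilin : IsConformalBilin DQ DQ DQ bq

/-- The unified product bracket on `R × Q`:
`[(a,x)_λ (b,y)] = ([a_λ b] + a↼_λ y + x▷_λ b + f_λ(x,y), a⇀_λ y + x◁_λ b + {x_λ y})`. -/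
def unifiedBracket {R Q : Type*}
    [AddCommGroup R] [Module ℂ R] [AddCommGroup Q] [Module ℂ Q]
    (br : ℂ → R → R → R)
    (lh : ℂ → R → Q → R) (rh : ℂ → R → Q → Q)
    (lt : ℂ → Q → R → Q) (rt : ℂ → Q → R → R)
    (fm : ℂ → Q → Q → R) (bq : ℂ → Q → Q → Q) :
    ℂ → R × Q → R × Q → R × Q :=
  fun l p q =>
    (br l p.1 q.1 + lh l p.1 q.2 + rt l p.2 q.1 + fm l p.2 q.2,
     rh l p.1 q.2 + lt l p.2 q.1 + bq l p.2 q.2)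

/-! The Jacobiator of a biadditive bracket is additive in each argument, so on `R × Q` it vanishes
as soon as it vanishes when each argument lies in `R` or in `Q`. Of the eight cases, the one with
all arguments in `R` is the Jacobi identity of `R`, and the two components of the others give the
conditions (L1)–(L14). The cases `(x, a, ·)` with `x ∈ Q` and `a ∈ R` are traded for the vanishing
of `[([a_λ x] + [x_μ a])_{λ+μ} ·]`, which up to sign is the sum of the Jacobiators of `(a, x, ·)`
and `(x, a, ·)`; this gives (L5), (L6), (L9) and (L10). -/

section IsPolyFun

variable {V W : Type*} [AddCommGroup V] [Module ℂ V] [AddCommGroup W] [Module ℂ W]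

theorem isPolyFun_iff_exists_polynomialModule {g : ℂ → V} :
    IsPolyFun g ↔ ∃ p : PolynomialModule ℂ V, ∀ l, g l = PolynomialModule.eval l p := by
  constructor
  · rintro ⟨N, c, hc⟩
    exact ⟨∑ i ∈ Finset.range N, PolynomialModule.single ℂ i (c i), fun l => by simp [hc]⟩
  · rintro ⟨p, hp⟩
    obtain ⟨N, hN⟩ := p.coeff.support.exists_nat_subset_range
    exact ⟨N, p.coeff, fun l =>
      (hp l).trans (Finsupp.sum_of_support_subset _ hN _ fun i _ => smul_zero _)⟩

theorem IsPolyFun.add {g h : ℂ → V} (hg : IsPolyFun g) (hh : IsPolyFun h) :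
    IsPolyFun fun l => g l + h l := by
  rw [isPolyFun_iff_exists_polynomialModule] at *
  obtain ⟨p, hp⟩ := hg
  obtain ⟨q, hq⟩ := hh
  exact ⟨p + q, fun l => by rw [map_add, hp, hq]⟩

theorem IsPolyFun.map {g : ℂ → V} (hg : IsPolyFun g) (φ : V →ₗ[ℂ] W) :
    IsPolyFun fun l => φ (g l) := by
  obtain ⟨N, c, hc⟩ := hg
  exact ⟨N, fun i => φ (c i), fun l => by simp only [hc, map_sum, map_smul]⟩

theorem IsPolyFun.prodMk {g : ℂ → V} {h : ℂ → W} (hg : IsPolyFun g) (hh : IsPolyFun h) :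
    IsPolyFun fun l => (g l, h l) := by
  simpa using (hg.map (LinearMap.inl ℂ V W)).add (hh.map (LinearMap.inr ℂ V W))

end IsPolyFun

namespace IsConformalBilin

variable {U V W X : Type*} [AddCommGroup U] [Module ℂ U] [AddCommGroup V] [Module ℂ V]
  [AddCommGroup W] [Module ℂ W] [AddCommGroup X] [Module ℂ X]
  {DU : Module.End ℂ U} {DV : Module.End ℂ V} {DW : Module.End ℂ W} {DX : Module.End ℂ X}
  {f g : ℂ → U → V → W}

theorem zero_left_s2 (hf : IsConformalBilin DU DV DW f) (l : ℂ) (v : V) : f l 0 v = 0 := by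
  simpa using hf.smul_left l 0 0 v

theorem zero_right_s2 (hf : IsConformalBilin DU DV DW f) (l : ℂ) (u : U) : f l u 0 = 0 := by
  simpa using hf.smul_right l 0 u 0

theorem add (hf : IsConformalBilin DU DV DW f) (hg : IsConformalBilin DU DV DW g) :
    IsConformalBilin DU DV DW fun l u v => f l u v + g l u v where
  add_left l u u' v := by rw [hf.add_left, hg.add_left, add_add_add_comm]
  smul_left l c u v := by rw [hf.smul_left, hg.smul_left, smul_add]
  add_right l u v v' := by rw [hf.add_right, hg.add_right, add_add_add_comm]
  smul_right l c u v := by rw [hf.smul_right, hg.smul_right, smul_add]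
  poly u v := (hf.poly u v).add (hg.poly u v)
  conf_left l u v := by rw [hf.conf_left, hg.conf_left, smul_add]
  conf_right l u v := by
    rw [hf.conf_right, hg.conf_right, map_add, smul_add, add_add_add_comm]

theorem prodMk {h : ℂ → U → V → X} (hf : IsConformalBilin DU DV DW f)
    (hh : IsConformalBilin DU DV DX h) :
    IsConformalBilin DU DV (DW.prodMap DX) fun l u v => (f l u v, h l u v) where
  add_left l u u' v := by rw [hf.add_left, hh.add_left, Prod.mk_add_mk]
  smul_left l c u v := by rw [hf.smul_left, hh.smul_left, Prod.smul_mk]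
  add_right l u v v' := by rw [hf.add_right, hh.add_right, Prod.mk_add_mk]
  smul_right l c u v := by rw [hf.smul_right, hh.smul_right, Prod.smul_mk]
  poly u v := (hf.poly u v).prodMk (hh.poly u v)
  conf_left l u v := by rw [hf.conf_left, hh.conf_left, Prod.smul_mk]
  conf_right l u v := by
    rw [hf.conf_right, hh.conf_right, LinearMap.prodMap_apply, Prod.smul_mk, Prod.mk_add_mk]

theorem comp {U' V' : Type*} [AddCommGroup U'] [Module ℂ U'] [AddCommGroup V'] [Module ℂ V']
    {DU' : Module.End ℂ U'} {DV' : Module.End ℂ V'} {φ : U' →ₗ[ℂ] U} {ψ : V' →ₗ[ℂ] V}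
    (hf : IsConformalBilin DU DV DW f)
    (hφ : ∀ u, φ (DU' u) = DU (φ u)) (hψ : ∀ v, ψ (DV' v) = DV (ψ v)) :
    IsConformalBilin DU' DV' DW fun l u v => f l (φ u) (ψ v) where
  add_left l u u' v := by rw [map_add, hf.add_left]
  smul_left l c u v := by rw [map_smul, hf.smul_left]
  add_right l u v v' := by rw [map_add, hf.add_right]
  smul_right l c u v := by rw [map_smul, hf.smul_right]
  poly u v := hf.poly (φ u) (ψ v)
  conf_left l u v := by rw [hφ, hf.conf_left]
  conf_right l u v := by rw [hψ, hf.conf_right]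

end IsConformalBilin

/-- The Jacobiator `[a_λ [b_μ c]] - [[a_λ b]_{λ+μ} c] - [b_μ [a_λ c]]` of a `λ`-bracket: its
failure to satisfy the Leibniz form of the Jacobi identity. -/
def jacobiator {A : Type*} [AddCommGroup A] (br : ℂ → A → A → A) (l m : ℂ) (a b c : A) : A :=
  br l a (br m b c) - br (l + m) (br l a b) c - br m b (br l a c)

section Jacobiator

variable {A : Type*} [AddCommGroup A] [Module ℂ A] {D : Module.End ℂ A} {br : ℂ → A → A → A}

theorem isLeibnizConformal_iff_jacobiator_eq_zero :
    IsLeibnizConformal D br ↔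
      IsConformalBilin D D D br ∧ ∀ l m a b c, jacobiator br l m a b c = 0 := by
  simp only [jacobiator, sub_sub, sub_eq_zero]
  exact ⟨fun h => ⟨h.bilin, h.jacobi⟩, fun h => ⟨h.1, h.2⟩⟩

theorem jacobiator_add_left (h : IsConformalBilin D D D br) (l m : ℂ) (a a' b c : A) :
    jacobiator br l m (a + a') b c = jacobiator br l m a b c + jacobiator br l m a' b c := by
  simp only [jacobiator, h.add_left, h.add_right]
  abel

theorem jacobiator_add_middle (h : IsConformalBilin D D D br) (l m : ℂ) (a b b' c : A) :
    jacobiator br l m a (b + b') c = jacobiator br l m a b c + jacobiator br l m a b' c := by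
  simp only [jacobiator, h.add_left, h.add_right]
  abel

theorem jacobiator_add_right (h : IsConformalBilin D D D br) (l m : ℂ) (a b c c' : A) :
    jacobiator br l m a b (c + c') = jacobiator br l m a b c + jacobiator br l m a b c' := by
  simp only [jacobiator, h.add_right]
  abel

theorem jacobiator_add_jacobiator_swap (h : IsConformalBilin D D D br) (l m : ℂ) (a b c : A) :
    jacobiator br l m a b c + jacobiator br m l b a c =
      -br (l + m) (br l a b + br m b a) c := by
  simp only [jacobiator, h.add_left, add_comm m l]
  abel

theorem jacobiator_swap_eq_zero_iff (h : IsConformalBilin D D D br) {l m : ℂ} {a b c : A}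
    (habc : jacobiator br l m a b c = 0) :
    jacobiator br m l b a c = 0 ↔ br (l + m) (br l a b + br m b a) c = 0 := by
  rw [← neg_eq_zero (a := br (l + m) _ c), ← jacobiator_add_jacobiator_swap h, habc, zero_add]

end Jacobiator

section Prod

variable {R Q : Type*} [AddCommGroup R] [Module ℂ R] [AddCommGroup Q] [Module ℂ Q]
  {D : Module.End ℂ (R × Q)} {br : ℂ → R × Q → R × Q → R × Q}

theorem jacobiator_prod_eq_zero_iff (h : IsConformalBilin D D D br) :
    (∀ l m p q r, jacobiator br l m p q r = 0) ↔
      (∀ l m a b c, jacobiator br l m (a, 0) (b, 0) (c, 0) = 0) ∧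
      (∀ l m a b x, jacobiator br l m (a, 0) (b, 0) (0, x) = 0) ∧
      (∀ l m a b x, jacobiator br l m (a, 0) (0, x) (b, 0) = 0) ∧
      (∀ l m a b x, jacobiator br m l (0, x) (a, 0) (b, 0) = 0) ∧
      (∀ l m a x y, jacobiator br l m (a, 0) (0, x) (0, y) = 0) ∧
      (∀ l m a x y, jacobiator br m l (0, x) (a, 0) (0, y) = 0) ∧
      (∀ l m a x y, jacobiator br l m (0, x) (0, y) (a, 0) = 0) ∧
      (∀ l m x y z, jacobiator br l m (0, x) (0, y) (0, z) = 0) := by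
  constructor
  · intro hJ
    simp only [hJ, implies_true, and_self]
  · rintro ⟨hRRR, hRRQ, hRQR, hQRR, hRQQ, hQRQ, hQQR, hQQQ⟩ l m ⟨a, x⟩ ⟨b, y⟩ ⟨c, z⟩
    have inl_add_inr (a : R) (x : Q) : (a, x) = (a, 0) + (0, x) := by simp
    rw [inl_add_inr a x, inl_add_inr b y, inl_add_inr c z]
    simp only [jacobiator_add_left h, jacobiator_add_middle h, jacobiator_add_right h,
      hRRR, hRRQ, hRQR, hQRR, hRQQ, hQRQ, hQQR, hQQQ, add_zero]

theorem jacobiator_prod_eq_zero_iff_symmetrized (h : IsConformalBilin D D D br) :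
    (∀ l m p q r, jacobiator br l m p q r = 0) ↔
      (∀ l m a b c, jacobiator br l m (a, 0) (b, 0) (c, 0) = 0) ∧
      (∀ l m a b x, jacobiator br l m (a, 0) (b, 0) (0, x) = 0) ∧
      (∀ l m a b x, jacobiator br l m (a, 0) (0, x) (b, 0) = 0) ∧
      (∀ l m a b x, br (l + m) (br l (a, 0) (0, x) + br m (0, x) (a, 0)) (b, 0) = 0) ∧
      (∀ l m a x y, jacobiator br l m (a, 0) (0, x) (0, y) = 0) ∧
      (∀ l m a x y, br (l + m) (br l (a, 0) (0, x) + br m (0, x) (a, 0)) (0, y) = 0) ∧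
      (∀ l m a x y, jacobiator br l m (0, x) (0, y) (a, 0) = 0) ∧
      (∀ l m x y z, jacobiator br l m (0, x) (0, y) (0, z) = 0) := by
  rw [jacobiator_prod_eq_zero_iff h]
  refine and_congr_right fun _ => and_congr_right fun _ => and_congr_right fun hRQR =>
    and_congr ?_ <| and_congr_right fun hRQQ => and_congr_left fun _ => ?_
  · simp only [jacobiator_swap_eq_zero_iff h (hRQR _ _ _ _ _)]
  · simp only [jacobiator_swap_eq_zero_iff h (hRQQ _ _ _ _ _)]

end Prod

section UnifiedBracket

variable {R Q : Type*} [AddCommGroup R] [Module ℂ R] [AddCommGroup Q] [Module ℂ Q]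
  {DR : Module.End ℂ R} {DQ : Module.End ℂ Q} {br : ℂ → R → R → R}
  {lh : ℂ → R → Q → R} {rh : ℂ → R → Q → Q} {lt : ℂ → Q → R → Q} {rt : ℂ → Q → R → R}
  {fm : ℂ → Q → Q → R} {bq : ℂ → Q → Q → Q}

theorem IsConformalBilin.unifiedBracket (hbr : IsConformalBilin DR DR DR br)
    (hΩ : IsExtendingDatum DR DQ lh rh lt rt fm bq) :
    IsConformalBilin (DR.prodMap DQ) (DR.prodMap DQ) (DR.prodMap DQ)
      (unifiedBracket br lh rh lt rt fm bq) := by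
  have hfst (p : R × Q) : LinearMap.fst ℂ R Q (DR.prodMap DQ p) = DR (LinearMap.fst ℂ R Q p) := rfl
  have hsnd (p : R × Q) : LinearMap.snd ℂ R Q (DR.prodMap DQ p) = DQ (LinearMap.snd ℂ R Q p) := rfl
  exact ((((hbr.comp hfst hfst).add (hΩ.lh_bilin.comp hfst hsnd)).add
      (hΩ.rt_bilin.comp hsnd hfst)).add (hΩ.fm_bilin.comp hsnd hsnd)).prodMk
    (((hΩ.rh_bilin.comp hfst hsnd).add (hΩ.lt_bilin.comp hsnd hfst)).add
      (hΩ.bq_bilin.comp hsnd hsnd))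

theorem unifiedBracket_inl_left (hΩ : IsExtendingDatum DR DQ lh rh lt rt fm bq)
    (l : ℂ) (a : R) (q : R × Q) :
    unifiedBracket br lh rh lt rt fm bq l (a, 0) q =
      (br l a q.1 + lh l a q.2, rh l a q.2) := by
  simp only [unifiedBracket, hΩ.rt_bilin.zero_left_s2, hΩ.fm_bilin.zero_left_s2,
    hΩ.lt_bilin.zero_left_s2, hΩ.bq_bilin.zero_left_s2, add_zero]

theorem unifiedBracket_inr_left (hbr : IsConformalBilin DR DR DR br)
    (hΩ : IsExtendingDatum DR DQ lh rh lt rt fm bq) (l : ℂ) (x : Q) (q : R × Q) :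
    unifiedBracket br lh rh lt rt fm bq l (0, x) q =
      (rt l x q.1 + fm l x q.2, lt l x q.1 + bq l x q.2) := by
  simp only [unifiedBracket, hbr.zero_left_s2, hΩ.lh_bilin.zero_left_s2, hΩ.rh_bilin.zero_left_s2,
    zero_add]

theorem unifiedBracket_inl_right (hΩ : IsExtendingDatum DR DQ lh rh lt rt fm bq)
    (l : ℂ) (p : R × Q) (b : R) :
    unifiedBracket br lh rh lt rt fm bq l p (b, 0) =
      (br l p.1 b + rt l p.2 b, lt l p.2 b) := by
  simp only [unifiedBracket, hΩ.lh_bilin.zero_right_s2, hΩ.fm_bilin.zero_right_s2,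
    hΩ.rh_bilin.zero_right_s2, hΩ.bq_bilin.zero_right_s2, add_zero, zero_add]

theorem unifiedBracket_inr_right (hbr : IsConformalBilin DR DR DR br)
    (hΩ : IsExtendingDatum DR DQ lh rh lt rt fm bq) (l : ℂ) (p : R × Q) (y : Q) :
    unifiedBracket br lh rh lt rt fm bq l p (0, y) =
      (lh l p.1 y + fm l p.2 y, rh l p.1 y + bq l p.2 y) := by
  simp only [unifiedBracket, hbr.zero_right_s2, hΩ.rt_bilin.zero_right_s2, hΩ.lt_bilin.zero_right_s2,
    add_zero, zero_add]

theorem unifiedBracket_inl_inl (hΩ : IsExtendingDatum DR DQ lh rh lt rt fm bq)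
    (l : ℂ) (a b : R) :
    unifiedBracket br lh rh lt rt fm bq l (a, 0) (b, 0) = (br l a b, 0) := by
  rw [unifiedBracket_inl_left hΩ, hΩ.lh_bilin.zero_right_s2, hΩ.rh_bilin.zero_right_s2, add_zero]

theorem unifiedBracket_inl_inr (hbr : IsConformalBilin DR DR DR br)
    (hΩ : IsExtendingDatum DR DQ lh rh lt rt fm bq) (l : ℂ) (a : R) (y : Q) :
    unifiedBracket br lh rh lt rt fm bq l (a, 0) (0, y) = (lh l a y, rh l a y) := by
  rw [unifiedBracket_inl_left hΩ, hbr.zero_right_s2, zero_add]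

theorem unifiedBracket_inr_inl (hbr : IsConformalBilin DR DR DR br)
    (hΩ : IsExtendingDatum DR DQ lh rh lt rt fm bq) (l : ℂ) (x : Q) (b : R) :
    unifiedBracket br lh rh lt rt fm bq l (0, x) (b, 0) = (rt l x b, lt l x b) := by
  rw [unifiedBracket_inl_right hΩ, hbr.zero_left_s2, zero_add]

theorem unifiedBracket_inr_inr (hbr : IsConformalBilin DR DR DR br)
    (hΩ : IsExtendingDatum DR DQ lh rh lt rt fm bq) (l : ℂ) (x y : Q) :
    unifiedBracket br lh rh lt rt fm bq l (0, x) (0, y) = (fm l x y, bq l x y) := by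
  rw [unifiedBracket_inr_left hbr hΩ, hΩ.rt_bilin.zero_right_s2, hΩ.lt_bilin.zero_right_s2, zero_add,
    zero_add]

theorem jacobiator_unifiedBracket_inl_inl_inl (hΩ : IsExtendingDatum DR DQ lh rh lt rt fm bq)
    (l m : ℂ) (a b c : R) :
    jacobiator (unifiedBracket br lh rh lt rt fm bq) l m (a, 0) (b, 0) (c, 0) =
      (jacobiator br l m a b c, 0) := by
  simp only [jacobiator, unifiedBracket_inl_inl hΩ, Prod.mk_sub_mk, sub_zero]

theorem jacobiator_unifiedBracket_inl_inl_inr_eq_zero_iff (hbr : IsConformalBilin DR DR DR br)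
    (hΩ : IsExtendingDatum DR DQ lh rh lt rt fm bq) {l m : ℂ} {a b : R} {x : Q} :
    jacobiator (unifiedBracket br lh rh lt rt fm bq) l m (a, 0) (b, 0) (0, x) = 0 ↔
      rh (l + m) (br l a b) x = rh l a (rh m b x) - rh m b (rh l a x) ∧
      lh (l + m) (br l a b) x
        = br l a (lh m b x) + lh l a (rh m b x) - br m b (lh l a x) - lh m b (rh l a x) := by
  simp only [jacobiator, unifiedBracket_inl_inl hΩ, unifiedBracket_inl_inr hbr hΩ]
  simp only [unifiedBracket_inl_left hΩ, Prod.mk_sub_mk, Prod.mk_eq_zero]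
  grind

theorem jacobiator_unifiedBracket_inl_inr_inl_eq_zero_iff (hbr : IsConformalBilin DR DR DR br)
    (hΩ : IsExtendingDatum DR DQ lh rh lt rt fm bq) {l m : ℂ} {a b : R} {x : Q} :
    jacobiator (unifiedBracket br lh rh lt rt fm bq) l m (a, 0) (0, x) (b, 0) = 0 ↔
      lt m x (br l a b) = rh l a (lt m x b) - lt (l + m) (rh l a x) b ∧
      rt m x (br l a b)
        = br l a (rt m x b) + lh l a (lt m x b) - br (l + m) (lh l a x) b
          - rt (l + m) (rh l a x) b := by
  simp only [jacobiator, unifiedBracket_inl_inl hΩ, unifiedBracket_inl_inr hbr hΩ,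
    unifiedBracket_inr_inl hbr hΩ]
  simp only [unifiedBracket_inl_left hΩ, unifiedBracket_inl_right hΩ, Prod.mk_sub_mk,
    Prod.mk_eq_zero]
  grind

theorem unifiedBracket_add_swap_inl_eq_zero_iff (hbr : IsConformalBilin DR DR DR br)
    (hΩ : IsExtendingDatum DR DQ lh rh lt rt fm bq) {l m : ℂ} {a b : R} {x : Q} :
    unifiedBracket br lh rh lt rt fm bq (l + m)
        (unifiedBracket br lh rh lt rt fm bq l (a, 0) (0, x)
          + unifiedBracket br lh rh lt rt fm bq m (0, x) (a, 0)) (b, 0) = 0 ↔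
      br (l + m) (rt m x a) b + rt (l + m) (lt m x a) b + br (l + m) (lh l a x) b
        + rt (l + m) (rh l a x) b = 0 ∧
      lt (l + m) (lt m x a) b + lt (l + m) (rh l a x) b = 0 := by
  simp only [unifiedBracket_inl_inr hbr hΩ, unifiedBracket_inr_inl hbr hΩ, Prod.mk_add_mk,
    unifiedBracket_inl_right hΩ, hbr.add_left, hΩ.rt_bilin.add_left, hΩ.lt_bilin.add_left,
    Prod.mk_eq_zero]
  grind

theorem jacobiator_unifiedBracket_inl_inr_inr_eq_zero_iff (hbr : IsConformalBilin DR DR DR br)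
    (hΩ : IsExtendingDatum DR DQ lh rh lt rt fm bq) {l m : ℂ} {a : R} {x y : Q} :
    jacobiator (unifiedBracket br lh rh lt rt fm bq) l m (a, 0) (0, x) (0, y) = 0 ↔
      rh l a (bq m x y)
        = bq (l + m) (rh l a x) y + lt m x (lh l a y) + bq m x (rh l a y)
          + rh (l + m) (lh l a x) y ∧
      lh l a (bq m x y)
        = lh (l + m) (lh l a x) y + fm (l + m) (rh l a x) y + rt m x (lh l a y)
          + fm m x (rh l a y) - br l a (fm m x y) := by
  simp only [jacobiator, unifiedBracket_inl_inr hbr hΩ, unifiedBracket_inr_inr hbr hΩ]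
  simp only [unifiedBracket_inl_left hΩ, unifiedBracket_inr_left hbr hΩ,
    unifiedBracket_inr_right hbr hΩ, Prod.mk_sub_mk, Prod.mk_eq_zero]
  grind

theorem unifiedBracket_add_swap_inr_eq_zero_iff (hbr : IsConformalBilin DR DR DR br)
    (hΩ : IsExtendingDatum DR DQ lh rh lt rt fm bq) {l m : ℂ} {a : R} {x y : Q} :
    unifiedBracket br lh rh lt rt fm bq (l + m)
        (unifiedBracket br lh rh lt rt fm bq l (a, 0) (0, x)
          + unifiedBracket br lh rh lt rt fm bq m (0, x) (a, 0)) (0, y) = 0 ↔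
      lh (l + m) (rt m x a) y + fm (l + m) (lt m x a) y + lh (l + m) (lh l a x) y
        + fm (l + m) (rh l a x) y = 0 ∧
      bq (l + m) (rh l a x) y + rh (l + m) (lh l a x) y + rh (l + m) (rt m x a) y
        + bq (l + m) (lt m x a) y = 0 := by
  simp only [unifiedBracket_inl_inr hbr hΩ, unifiedBracket_inr_inl hbr hΩ, Prod.mk_add_mk,
    unifiedBracket_inr_right hbr hΩ, hΩ.lh_bilin.add_left, hΩ.rh_bilin.add_left,
    hΩ.fm_bilin.add_left, hΩ.bq_bilin.add_left, Prod.mk_eq_zero]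
  grind

theorem jacobiator_unifiedBracket_inr_inr_inl_eq_zero_iff (hbr : IsConformalBilin DR DR DR br)
    (hΩ : IsExtendingDatum DR DQ lh rh lt rt fm bq) {l m : ℂ} {a : R} {x y : Q} :
    jacobiator (unifiedBracket br lh rh lt rt fm bq) l m (0, x) (0, y) (a, 0) = 0 ↔
      rt (l + m) (bq l x y) a
        = rt l x (rt m y a) + fm l x (lt m y a) - br (l + m) (fm l x y) a
          - rt m y (rt l x a) - fm m y (lt l x a) ∧
      lt (l + m) (bq l x y) a
        = lt l x (rt m y a) + bq l x (lt m y a) - lt m y (rt l x a) - bq m y (lt l x a) := by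
  simp only [jacobiator, unifiedBracket_inr_inl hbr hΩ, unifiedBracket_inr_inr hbr hΩ]
  simp only [unifiedBracket_inr_left hbr hΩ, unifiedBracket_inl_right hΩ, Prod.mk_sub_mk,
    Prod.mk_eq_zero]
  grind

theorem jacobiator_unifiedBracket_inr_inr_inr_eq_zero_iff (hbr : IsConformalBilin DR DR DR br)
    (hΩ : IsExtendingDatum DR DQ lh rh lt rt fm bq) {l m : ℂ} {x y z : Q} :
    jacobiator (unifiedBracket br lh rh lt rt fm bq) l m (0, x) (0, y) (0, z) = 0 ↔
      rt l x (fm m y z)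
        = lh (l + m) (fm l x y) z + fm (l + m) (bq l x y) z + rt m y (fm l x z)
          + fm m y (bq l x z) - fm l x (bq m y z) ∧
      lt l x (fm m y z)
        = rh (l + m) (fm l x y) z + lt m y (fm l x z) + bq (l + m) (bq l x y) z
          + bq m y (bq l x z) - bq l x (bq m y z) := by
  simp only [jacobiator, unifiedBracket_inr_inr hbr hΩ]
  simp only [unifiedBracket_inr_left hbr hΩ, unifiedBracket_inr_right hbr hΩ, Prod.mk_sub_mk,
    Prod.mk_eq_zero]
  grind

end UnifiedBracket

/-- For an extending datum `Ω(R,Q)`, the unified product `R ♮ Q` is a Leibniz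
conformal algebra if and only if conditions (L1)–(L14) hold. -/
theorem unifiedBracket_isLeibnizConformal_iff
    {R Q : Type*} [AddCommGroup R] [Module ℂ R] [AddCommGroup Q] [Module ℂ Q]
    (DR : Module.End ℂ R) (DQ : Module.End ℂ Q)
    (br : ℂ → R → R → R) (hLeib : IsLeibnizConformal DR br)
    (lh : ℂ → R → Q → R) (rh : ℂ → R → Q → Q)
    (lt : ℂ → Q → R → Q) (rt : ℂ → Q → R → R)
    (fm : ℂ → Q → Q → R) (bq : ℂ → Q → Q → Q)
    (hdatum : IsExtendingDatum DR DQ lh rh lt rt fm bq) :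
    IsLeibnizConformal (LinearMap.prodMap DR DQ) (unifiedBracket br lh rh lt rt fm bq) ↔
    ((∀ (l m : ℂ) (a b : R) (x : Q),    -- (L1)
        rh (l + m) (br l a b) x = rh l a (rh m b x) - rh m b (rh l a x)) ∧
     (∀ (l m : ℂ) (a b : R) (x : Q),    -- (L2)
        lh (l + m) (br l a b) x
          = br l a (lh m b x) + lh l a (rh m b x) - br m b (lh l a x) - lh m b (rh l a x)) ∧
     (∀ (l m : ℂ) (a b : R) (x : Q),    -- (L3)
        lt m x (br l a b) = rh l a (lt m x b) - lt (l + m) (rh l a x) b) ∧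
     (∀ (l m : ℂ) (a b : R) (x : Q),    -- (L4)
        rt m x (br l a b)
          = br l a (rt m x b) + lh l a (lt m x b) - br (l + m) (lh l a x) b
            - rt (l + m) (rh l a x) b) ∧
     (∀ (l m : ℂ) (a b : R) (x : Q),    -- (L5)
        br (l + m) (rt m x a) b + rt (l + m) (lt m x a) b + br (l + m) (lh l a x) b
          + rt (l + m) (rh l a x) b = 0) ∧
     (∀ (l m : ℂ) (a b : R) (x : Q),    -- (L6)
        lt (l + m) (lt m x a) b + lt (l + m) (rh l a x) b = 0) ∧
     (∀ (l m : ℂ) (a : R) (x y : Q),    -- (L7)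
        rh l a (bq m x y)
          = bq (l + m) (rh l a x) y + lt m x (lh l a y) + bq m x (rh l a y)
            + rh (l + m) (lh l a x) y) ∧
     (∀ (l m : ℂ) (a : R) (x y : Q),    -- (L8)
        lh l a (bq m x y)
          = lh (l + m) (lh l a x) y + fm (l + m) (rh l a x) y + rt m x (lh l a y)
            + fm m x (rh l a y) - br l a (fm m x y)) ∧
     (∀ (l m : ℂ) (a : R) (x y : Q),    -- (L9)
        lh (l + m) (rt m x a) y + fm (l + m) (lt m x a) y + lh (l + m) (lh l a x) y
          + fm (l + m) (rh l a x) y = 0) ∧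
     (∀ (l m : ℂ) (a : R) (x y : Q),    -- (L10)
        bq (l + m) (rh l a x) y + rh (l + m) (lh l a x) y + rh (l + m) (rt m x a) y
          + bq (l + m) (lt m x a) y = 0) ∧
     (∀ (l m : ℂ) (a : R) (x y : Q),    -- (L11)
        rt (l + m) (bq l x y) a
          = rt l x (rt m y a) + fm l x (lt m y a) - br (l + m) (fm l x y) a
            - rt m y (rt l x a) - fm m y (lt l x a)) ∧
     (∀ (l m : ℂ) (a : R) (x y : Q),    -- (L12)
        lt (l + m) (bq l x y) a
          = lt l x (rt m y a) + bq l x (lt m y a) - lt m y (rt l x a) - bq m y (lt l x a)) ∧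
     (∀ (l m : ℂ) (x y z : Q),          -- (L13)
        rt l x (fm m y z)
          = lh (l + m) (fm l x y) z + fm (l + m) (bq l x y) z + rt m y (fm l x z)
            + fm m y (bq l x z) - fm l x (bq m y z)) ∧
     (∀ (l m : ℂ) (x y z : Q),          -- (L14)
        lt l x (fm m y z)
          = rh (l + m) (fm l x y) z + lt m y (fm l x z) + bq (l + m) (bq l x y) z
            + bq m y (bq l x z) - bq l x (bq m y z))) := by
  obtain ⟨hbr, hJac⟩ := isLeibnizConformal_iff_jacobiator_eq_zero.mp hLeib
  have hprod := hbr.unifiedBracket hdatum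
  have hRRR (l m : ℂ) (a b c : R) :
      jacobiator (unifiedBracket br lh rh lt rt fm bq) l m (a, 0) (b, 0) (c, 0) = 0 := by
    rw [jacobiator_unifiedBracket_inl_inl_inl hdatum, hJac, Prod.mk_zero_zero]
  rw [isLeibnizConformal_iff_jacobiator_eq_zero, and_iff_right hprod,
    jacobiator_prod_eq_zero_iff_symmetrized hprod, and_iff_right hRRR]
  simp only [jacobiator_unifiedBracket_inl_inl_inr_eq_zero_iff hbr hdatum,
    jacobiator_unifiedBracket_inl_inr_inl_eq_zero_iff hbr hdatum,
    unifiedBracket_add_swap_inl_eq_zero_iff hbr hdatum,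
    jacobiator_unifiedBracket_inl_inr_inr_eq_zero_iff hbr hdatum,
    unifiedBracket_add_swap_inr_eq_zero_iff hbr hdatum,
    jacobiator_unifiedBracket_inr_inr_inl_eq_zero_iff hbr hdatum,
    jacobiator_unifiedBracket_inr_inr_inr_eq_zero_iff hbr hdatum,
    forall_and, and_assoc]
end
end

section
/- Let R be a Leibniz conformal algebra, Q a ℂ[∂]-module, and E = R ⊕ Q as ℂ[∂]-modules. Then: (1) the map LH²_R(Q,R) := TCL(R,Q)/≡ → CExtd(E,R) sending the equivalence class of a Leibniz conformal extending structure Ω(R,Q) to the equivalence class of the unified product (R♮Q, [·_λ·]) is a bijection; (2) the map LH²(Q,R) := TCL(R,Q)/≈ → CExtd'(E,R) defined in the same way is a bijection. -/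
noncomputable section

/-- `φ` commutes with the `ℂ[∂]`-module structure, i.e. is a `ℂ[∂]`-module map. -/
def PreservesD {E : Type*} [AddCommGroup E] [Module ℂ E]
    (D : Module.End ℂ E) (φ : E →ₗ[ℂ] E) : Prop :=
  ∀ u : E, φ (D u) = D (φ u)

/-- `φ` intertwines the two `λ`-brackets. -/
def IsBracketHom {E : Type*} [AddCommGroup E] [Module ℂ E]
    (br br' : ℂ → E → E → E) (φ : E →ₗ[ℂ] E) : Prop :=
  ∀ (l : ℂ) (u v : E), φ (br l u v) = br' l (φ u) (φ v)

/-- `φ : R ⊕ Q → R ⊕ Q` stabilizes `R`. -/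
def StabilizesFst {R Q : Type*} [AddCommGroup R] [Module ℂ R] [AddCommGroup Q] [Module ℂ Q]
    (φ : R × Q →ₗ[ℂ] R × Q) : Prop :=
  ∀ a : R, φ (a, 0) = (a, 0)

/-- `φ : R ⊕ Q → R ⊕ Q` co-stabilizes `Q`. -/
def CoStabilizesSnd {R Q : Type*} [AddCommGroup R] [Module ℂ R] [AddCommGroup Q] [Module ℂ Q]
    (φ : R × Q →ₗ[ℂ] R × Q) : Prop :=
  ∀ p : R × Q, (φ p).2 = p.2

/-- The extending datum `(lh, rh, lt, rt, fm, bq)` is obtained from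
`(lh', rh', lt', rt', fm', bq')` via the pair `(u, v)` (Definition 3.5 of the paper). -/
def DatumEquivVia {R Q : Type*}
    [AddCommGroup R] [Module ℂ R] [AddCommGroup Q] [Module ℂ Q]
    (DR : Module.End ℂ R) (DQ : Module.End ℂ Q) (br : ℂ → R → R → R)
    (lh : ℂ → R → Q → R) (rh : ℂ → R → Q → Q)
    (lt : ℂ → Q → R → Q) (rt : ℂ → Q → R → R)
    (fm : ℂ → Q → Q → R) (bq : ℂ → Q → Q → Q)
    (lh' : ℂ → R → Q → R) (rh' : ℂ → R → Q → Q)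
    (lt' : ℂ → Q → R → Q) (rt' : ℂ → Q → R → R)
    (fm' : ℂ → Q → Q → R) (bq' : ℂ → Q → Q → Q)
    (u : Q →ₗ[ℂ] R) (v : Q ≃ₗ[ℂ] Q) : Prop :=
  (∀ q : Q, u (DQ q) = DR (u q)) ∧
  (∀ q : Q, v (DQ q) = DQ (v q)) ∧
  (∀ (l : ℂ) (a : R) (x : Q), rh l a x = v.symm (rh' l a (v x))) ∧
  (∀ (l : ℂ) (a : R) (x : Q),
      lh l a x = br l a (u x) + lh' l a (v x) - u (rh l a x)) ∧
  (∀ (l : ℂ) (x : Q) (a : R), lt l x a = v.symm (lt' l (v x) a)) ∧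
  (∀ (l : ℂ) (x : Q) (a : R),
      rt l x a = br l (u x) a + rt' l (v x) a - u (lt l x a)) ∧
  (∀ (l : ℂ) (x y : Q),
      bq l x y = v.symm (rh' l (u x) (v y)) + v.symm (lt' l (v x) (u y))
        + v.symm (bq' l (v x) (v y))) ∧
  (∀ (l : ℂ) (x y : Q),
      fm l x y = br l (u x) (u y) + lh' l (u x) (v y) + rt' l (v x) (u y)
        + fm' l (v x) (v y) - u (bq l x y))

/-- A Leibniz conformal extending structure of `(R, DR, br)` by the `ℂ[∂]`-module `Q`
(an element of `TCL(R,Q)`). -/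
structure ExtStruct (R Q : Type*)
    [AddCommGroup R] [Module ℂ R] [AddCommGroup Q] [Module ℂ Q]
    (DR : Module.End ℂ R) (DQ : Module.End ℂ Q) (br : ℂ → R → R → R) where
  lh : ℂ → R → Q → R
  rh : ℂ → R → Q → Q
  lt : ℂ → Q → R → Q
  rt : ℂ → Q → R → R
  fm : ℂ → Q → Q → R
  bq : ℂ → Q → Q → Q
  datum : IsExtendingDatum DR DQ lh rh lt rt fm bq
  leib : IsLeibnizConformal (LinearMap.prodMap DR DQ)
    (unifiedBracket br lh rh lt rt fm bq)

/-- A Leibniz conformal algebra structure on `E = R ⊕ Q` containing `R`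
as a subalgebra (an element of the set underlying `CExtd(E,R)`). -/
structure LCAOn (R Q : Type*)
    [AddCommGroup R] [Module ℂ R] [AddCommGroup Q] [Module ℂ Q]
    (DR : Module.End ℂ R) (DQ : Module.End ℂ Q) (br : ℂ → R → R → R) where
  brE : ℂ → R × Q → R × Q → R × Q
  leib : IsLeibnizConformal (LinearMap.prodMap DR DQ) brE
  sub : ∀ (l : ℂ) (a b : R), brE l (a, 0) (b, 0) = (br l a b, 0)

theorem IsConformalBilin.zero_left {U V W : Type*}
    [AddCommGroup U] [Module ℂ U] [AddCommGroup V] [Module ℂ V]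
    [AddCommGroup W] [Module ℂ W]
    {DU : Module.End ℂ U} {DV : Module.End ℂ V} {DW : Module.End ℂ W}
    {f : ℂ → U → V → W} (hf : IsConformalBilin DU DV DW f) (l : ℂ) (b : V) :
    f l 0 b = 0 := by
  have h := hf.smul_left l 0 0 b
  simpa using h

theorem IsConformalBilin.zero_right {U V W : Type*}
    [AddCommGroup U] [Module ℂ U] [AddCommGroup V] [Module ℂ V]
    [AddCommGroup W] [Module ℂ W]
    {DU : Module.End ℂ U} {DV : Module.End ℂ V} {DW : Module.End ℂ W}
    {f : ℂ → U → V → W} (hf : IsConformalBilin DU DV DW f) (l : ℂ) (a : U) :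
    f l a 0 = 0 := by
  have h := hf.smul_right l 0 a 0
  simpa using h

/-- The unified product of an extending structure, as a Leibniz conformal algebra
structure on `E = R ⊕ Q` containing `R` as a subalgebra. -/
def ExtStruct.toLCA {R Q : Type*}
    [AddCommGroup R] [Module ℂ R] [AddCommGroup Q] [Module ℂ Q]
    {DR : Module.End ℂ R} {DQ : Module.End ℂ Q} {br : ℂ → R → R → R}
    (Ω : ExtStruct R Q DR DQ br) : LCAOn R Q DR DQ br where
  brE := unifiedBracket br Ω.lh Ω.rh Ω.lt Ω.rt Ω.fm Ω.bq
  leib := Ω.leib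
  sub := by
    intro l a b
    simp [unifiedBracket, Ω.datum.lh_bilin.zero_right, Ω.datum.rt_bilin.zero_left,
      Ω.datum.fm_bilin.zero_left, Ω.datum.rh_bilin.zero_right,
      Ω.datum.lt_bilin.zero_left, Ω.datum.bq_bilin.zero_left]

/-- The equivalence relation `≡` on extending structures. -/
def extEquiv {R Q : Type*}
    [AddCommGroup R] [Module ℂ R] [AddCommGroup Q] [Module ℂ Q]
    (DR : Module.End ℂ R) (DQ : Module.End ℂ Q) (br : ℂ → R → R → R)
    (Ω Ω' : ExtStruct R Q DR DQ br) : Prop :=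
  ∃ (u : Q →ₗ[ℂ] R) (v : Q ≃ₗ[ℂ] Q),
    DatumEquivVia DR DQ br Ω.lh Ω.rh Ω.lt Ω.rt Ω.fm Ω.bq
      Ω'.lh Ω'.rh Ω'.lt Ω'.rt Ω'.fm Ω'.bq u v

/-- The relation `≈` (cohomologous) on extending structures. -/
def extCohom {R Q : Type*}
    [AddCommGroup R] [Module ℂ R] [AddCommGroup Q] [Module ℂ Q]
    (DR : Module.End ℂ R) (DQ : Module.End ℂ Q) (br : ℂ → R → R → R)
    (Ω Ω' : ExtStruct R Q DR DQ br) : Prop :=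
  ∃ u : Q →ₗ[ℂ] R,
    DatumEquivVia DR DQ br Ω.lh Ω.rh Ω.lt Ω.rt Ω.fm Ω.bq
      Ω'.lh Ω'.rh Ω'.lt Ω'.rt Ω'.fm Ω'.bq u (LinearEquiv.refl ℂ Q)

/-- The relation `≡` on Leibniz conformal algebra structures on `E = R ⊕ Q` containing `R`
as a subalgebra: isomorphism stabilizing `R`. -/
def lcaEquiv {R Q : Type*}
    [AddCommGroup R] [Module ℂ R] [AddCommGroup Q] [Module ℂ Q]
    (DR : Module.End ℂ R) (DQ : Module.End ℂ Q) (br : ℂ → R → R → R)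
    (A B : LCAOn R Q DR DQ br) : Prop :=
  ∃ φ : R × Q →ₗ[ℂ] R × Q, Function.Bijective φ ∧
    PreservesD (LinearMap.prodMap DR DQ) φ ∧ IsBracketHom A.brE B.brE φ ∧
    StabilizesFst φ

/-- The relation `≈` on Leibniz conformal algebra structures on `E = R ⊕ Q` containing `R`
as a subalgebra: isomorphism stabilizing `R` and co-stabilizing `Q`. -/
def lcaCohom {R Q : Type*}
    [AddCommGroup R] [Module ℂ R] [AddCommGroup Q] [Module ℂ Q]
    (DR : Module.End ℂ R) (DQ : Module.End ℂ Q) (br : ℂ → R → R → R)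
    (A B : LCAOn R Q DR DQ br) : Prop :=
  ∃ φ : R × Q →ₗ[ℂ] R × Q, Function.Bijective φ ∧
    PreservesD (LinearMap.prodMap DR DQ) φ ∧ IsBracketHom A.brE B.brE φ ∧
    StabilizesFst φ ∧ CoStabilizesSnd φ

/-!
Splitting both arguments of a `λ`-bracket on `E = R ⊕ Q` along the direct sum gives four blocks.
The block `R × R` is the given bracket of `R`, and the components of the other three are the six
maps of an extending datum; so extending structures are literally the same thing as the structures
on `E` containing `R`. An automorphism of `E` which is the identity on `R` is a shear
`(a, x) ↦ (a + u x, v x)`, and comparing two unified products along it block by block yields the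
six equations relating their extending structures. The shear is compatible with the projection to
`Q` exactly when `v = Id`.
-/

section ConformalBilin

variable {U V W U' V' W' : Type*}
  [AddCommGroup U] [Module ℂ U] [AddCommGroup V] [Module ℂ V] [AddCommGroup W] [Module ℂ W]
  [AddCommGroup U'] [Module ℂ U'] [AddCommGroup V'] [Module ℂ V'] [AddCommGroup W'] [Module ℂ W']

theorem IsPolyFun.map_linearMap {g : ℂ → W} (hg : IsPolyFun g) (p : W →ₗ[ℂ] W') :
    IsPolyFun (fun l => p (g l)) := by
  obtain ⟨N, c, hc⟩ := hg
  exact ⟨N, fun i => p (c i), fun l => by simp [hc l]⟩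

theorem IsConformalBilin.comp_linearMap
    {DU : Module.End ℂ U} {DV : Module.End ℂ V} {DW : Module.End ℂ W}
    {DU' : Module.End ℂ U'} {DV' : Module.End ℂ V'} {DW' : Module.End ℂ W'}
    {f : ℂ → U → V → W} (hf : IsConformalBilin DU DV DW f)
    (i : U' →ₗ[ℂ] U) (j : V' →ₗ[ℂ] V) (p : W →ₗ[ℂ] W')
    (hi : ∀ x, i (DU' x) = DU (i x) := by simp) (hj : ∀ x, j (DV' x) = DV (j x) := by simp)
    (hp : ∀ x, p (DW x) = DW' (p x) := by simp) :
    IsConformalBilin DU' DV' DW' (fun l a b => p (f l (i a) (j b))) where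
  add_left l a a' b := by simp [hf.add_left]
  smul_left l c a b := by simp [hf.smul_left]
  add_right l a b b' := by simp [hf.add_right]
  smul_right l c a b := by simp [hf.smul_right]
  poly a b := (hf.poly (i a) (j b)).map_linearMap p
  conf_left l a b := by simp [hi, hf.conf_left]
  conf_right l a b := by simp [hj, hf.conf_right, hp]

theorem IsConformalBilin.apply_eq_add_blocks
    {D : Module.End ℂ (U × U')} {D' : Module.End ℂ (V × V')} {DW : Module.End ℂ W}
    {f : ℂ → U × U' → V × V' → W} (hf : IsConformalBilin D D' DW f)
    (l : ℂ) (p : U × U') (q : V × V') :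
    f l p q = f l (p.1, 0) (q.1, 0) + f l (p.1, 0) (0, q.2)
      + f l (0, p.2) (q.1, 0) + f l (0, p.2) (0, q.2) := by
  rw [add_assoc, ← hf.add_right, ← hf.add_right, ← hf.add_left]
  simp

end ConformalBilin

section Shear

variable {R Q : Type*} [AddCommGroup R] [Module ℂ R] [AddCommGroup Q] [Module ℂ Q]
  {DR : Module.End ℂ R} {DQ : Module.End ℂ Q}

/-- The automorphism `(a, x) ↦ (a + u x, v x)` of `R ⊕ Q` attached to a pair `(u, v)`. Mathlib's
`LinearEquiv.skewProd` shears along the other factor, hence the two swaps. -/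
def shear (u : Q →ₗ[ℂ] R) (v : Q ≃ₗ[ℂ] Q) : (R × Q) ≃ₗ[ℂ] (R × Q) :=
  LinearEquiv.prodComm ℂ R Q ≪≫ₗ v.skewProd (LinearEquiv.refl ℂ R) u ≪≫ₗ
    LinearEquiv.prodComm ℂ Q R

@[simp]
theorem shear_apply (u : Q →ₗ[ℂ] R) (v : Q ≃ₗ[ℂ] Q) (p : R × Q) :
    shear u v p = (p.1 + u p.2, v p.2) := rfl

theorem stabilizesFst_shear (u : Q →ₗ[ℂ] R) (v : Q ≃ₗ[ℂ] Q) :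
    StabilizesFst (shear u v).toLinearMap := fun a => by simp

theorem coStabilizesSnd_shear_iff (u : Q →ₗ[ℂ] R) (v : Q ≃ₗ[ℂ] Q) :
    CoStabilizesSnd (shear u v).toLinearMap ↔ v = LinearEquiv.refl ℂ Q := by
  simp [CoStabilizesSnd, LinearEquiv.ext_iff]

theorem preservesD_shear_iff (u : Q →ₗ[ℂ] R) (v : Q ≃ₗ[ℂ] Q) :
    PreservesD (LinearMap.prodMap DR DQ) (shear u v).toLinearMap ↔
      (∀ x, u (DQ x) = DR (u x)) ∧ ∀ x, v (DQ x) = DQ (v x) := by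
  simp [PreservesD, forall_and]

theorem StabilizesFst.apply_eq_add {φ : R × Q →ₗ[ℂ] R × Q} (hR : StabilizesFst φ) (p : R × Q) :
    φ p = (p.1, 0) + φ (0, p.2) := by
  rw [← hR, ← map_add, Prod.mk_add_mk, add_zero, zero_add]

theorem StabilizesFst.bijective_snd_comp_inr {φ : R × Q →ₗ[ℂ] R × Q} (hR : StabilizesFst φ)
    (hφ : Function.Bijective φ) :
    Function.Bijective (LinearMap.snd ℂ R Q ∘ₗ φ ∘ₗ LinearMap.inr ℂ R Q) := by
  refine ⟨(injective_iff_map_eq_zero _).2 fun x hx => ?_, fun y => ?_⟩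
  · have hφx : φ (0, x) = φ ((φ (0, x)).1, 0) := by
      rw [hR]
      exact Prod.ext rfl hx
    exact congrArg Prod.snd (hφ.injective hφx)
  · obtain ⟨p, hp⟩ := hφ.surjective (0, y)
    rw [hR.apply_eq_add] at hp
    exact ⟨p.2, by simpa using congrArg Prod.snd hp⟩

theorem StabilizesFst.exists_eq_shear {φ : R × Q →ₗ[ℂ] R × Q} (hR : StabilizesFst φ)
    (hφ : Function.Bijective φ) : ∃ u v, φ = (shear u v).toLinearMap := by
  refine ⟨LinearMap.fst ℂ R Q ∘ₗ φ ∘ₗ LinearMap.inr ℂ R Q,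
    LinearEquiv.ofBijective _ (hR.bijective_snd_comp_inr hφ), LinearMap.ext fun p => ?_⟩
  rw [hR.apply_eq_add p]
  ext <;> simp

end Shear

section Extensions

variable {R Q : Type*} [AddCommGroup R] [Module ℂ R] [AddCommGroup Q] [Module ℂ Q]
  {DR : Module.End ℂ R} {DQ : Module.End ℂ Q} {br : ℂ → R → R → R}

attribute [ext] LCAOn ExtStruct

namespace LCAOn

theorem isConformalBilin_bracket (A : LCAOn R Q DR DQ br) : IsConformalBilin DR DR DR br := by
  have hfst : br = fun l a b => (A.brE l (a, 0) (b, 0)).1 := by simp only [A.sub]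
  rw [hfst]
  exact A.leib.bilin.comp_linearMap (.inl ℂ R Q) (.inl ℂ R Q) (.fst ℂ R Q)

theorem unifiedBracket_blocks (A : LCAOn R Q DR DQ br) :
    unifiedBracket br
      (fun l a y => (A.brE l (a, 0) (0, y)).1) (fun l a y => (A.brE l (a, 0) (0, y)).2)
      (fun l x b => (A.brE l (0, x) (b, 0)).2) (fun l x b => (A.brE l (0, x) (b, 0)).1)
      (fun l x y => (A.brE l (0, x) (0, y)).1) (fun l x y => (A.brE l (0, x) (0, y)).2)
      = A.brE := by
  funext l p q
  rw [A.leib.bilin.apply_eq_add_blocks l p q, A.sub]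
  simp [unifiedBracket, Prod.ext_iff]

/-- The extending structure whose six maps are the `R`- and `Q`-components of the blocks
`R × Q`, `Q × R` and `Q × Q` of the bracket of `A`. -/
def toExtStruct (A : LCAOn R Q DR DQ br) : ExtStruct R Q DR DQ br where
  lh := fun l a y => (A.brE l (a, 0) (0, y)).1
  rh := fun l a y => (A.brE l (a, 0) (0, y)).2
  lt := fun l x b => (A.brE l (0, x) (b, 0)).2
  rt := fun l x b => (A.brE l (0, x) (b, 0)).1
  fm := fun l x y => (A.brE l (0, x) (0, y)).1
  bq := fun l x y => (A.brE l (0, x) (0, y)).2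
  datum :=
    { lh_bilin := A.leib.bilin.comp_linearMap (.inl ℂ R Q) (.inr ℂ R Q) (.fst ℂ R Q)
      rh_bilin := A.leib.bilin.comp_linearMap (.inl ℂ R Q) (.inr ℂ R Q) (.snd ℂ R Q)
      lt_bilin := A.leib.bilin.comp_linearMap (.inr ℂ R Q) (.inl ℂ R Q) (.snd ℂ R Q)
      rt_bilin := A.leib.bilin.comp_linearMap (.inr ℂ R Q) (.inl ℂ R Q) (.fst ℂ R Q)
      fm_bilin := A.leib.bilin.comp_linearMap (.inr ℂ R Q) (.inr ℂ R Q) (.fst ℂ R Q)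
      bq_bilin := A.leib.bilin.comp_linearMap (.inr ℂ R Q) (.inr ℂ R Q) (.snd ℂ R Q) }
  leib := A.unifiedBracket_blocks.symm ▸ A.leib

theorem toLCA_toExtStruct (A : LCAOn R Q DR DQ br) : A.toExtStruct.toLCA = A :=
  LCAOn.ext A.unifiedBracket_blocks

theorem isBracketHom_iff_of_stabilizesFst (A B : LCAOn R Q DR DQ br)
    {φ : R × Q →ₗ[ℂ] R × Q} (hR : StabilizesFst φ) :
    IsBracketHom A.brE B.brE φ ↔
      (∀ l a y, φ (A.brE l (a, 0) (0, y)) = B.brE l (a, 0) (φ (0, y))) ∧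
      (∀ l x b, φ (A.brE l (0, x) (b, 0)) = B.brE l (φ (0, x)) (b, 0)) ∧
      ∀ l x y, φ (A.brE l (0, x) (0, y)) = B.brE l (φ (0, x)) (φ (0, y)) := by
  constructor
  · intro hom
    exact ⟨fun l a y => by rw [hom, hR], fun l x b => by rw [hom, hR], fun l x y => hom ..⟩
  · rintro ⟨hRQ, hQR, hQQ⟩ l p q
    calc φ (A.brE l p q)
        = B.brE l (p.1, 0) (q.1, 0) + B.brE l (p.1, 0) (φ (0, q.2))
          + B.brE l (φ (0, p.2)) (q.1, 0) + B.brE l (φ (0, p.2)) (φ (0, q.2)) := by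
          rw [A.leib.bilin.apply_eq_add_blocks l p q, map_add, map_add, map_add,
            hRQ, hQR, hQQ, A.sub, hR, B.sub]
      _ = B.brE l ((p.1, 0) + φ (0, p.2)) ((q.1, 0) + φ (0, q.2)) := by
          rw [B.leib.bilin.add_left, B.leib.bilin.add_right, B.leib.bilin.add_right, add_assoc]
      _ = B.brE l (φ p) (φ q) := by rw [← hR.apply_eq_add, ← hR.apply_eq_add]

end LCAOn

theorem lcaEquiv_iff_exists_shear (A B : LCAOn R Q DR DQ br) :
    lcaEquiv DR DQ br A B ↔ ∃ u v,
      PreservesD (LinearMap.prodMap DR DQ) (shear u v).toLinearMap ∧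
      IsBracketHom A.brE B.brE (shear u v).toLinearMap := by
  constructor
  · rintro ⟨φ, hφ, hD, hom, hR⟩
    obtain ⟨u, v, rfl⟩ := hR.exists_eq_shear hφ
    exact ⟨u, v, hD, hom⟩
  · rintro ⟨u, v, hD, hom⟩
    exact ⟨_, (shear u v).bijective, hD, hom, stabilizesFst_shear u v⟩

theorem lcaCohom_iff_exists_shear_refl (A B : LCAOn R Q DR DQ br) :
    lcaCohom DR DQ br A B ↔ ∃ u,
      PreservesD (LinearMap.prodMap DR DQ) (shear u (LinearEquiv.refl ℂ Q)).toLinearMap ∧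
      IsBracketHom A.brE B.brE (shear u (LinearEquiv.refl ℂ Q)).toLinearMap := by
  constructor
  · rintro ⟨φ, hφ, hD, hom, hR, hQ⟩
    obtain ⟨u, v, rfl⟩ := hR.exists_eq_shear hφ
    obtain rfl := (coStabilizesSnd_shear_iff u v).1 hQ
    exact ⟨u, hD, hom⟩
  · rintro ⟨u, hD, hom⟩
    exact ⟨_, (shear u _).bijective, hD, hom, stabilizesFst_shear u _,
      (coStabilizesSnd_shear_iff u _).2 rfl⟩

namespace ExtStruct

theorem toLCA_brE_fst_left (Ω : ExtStruct R Q DR DQ br) (l : ℂ) (a : R) (q : R × Q) :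
    Ω.toLCA.brE l (a, 0) q = (br l a q.1 + Ω.lh l a q.2, Ω.rh l a q.2) := by
  simp [toLCA, unifiedBracket, Ω.datum.rt_bilin.zero_left, Ω.datum.fm_bilin.zero_left,
    Ω.datum.lt_bilin.zero_left, Ω.datum.bq_bilin.zero_left]

theorem toLCA_brE_fst_right (Ω : ExtStruct R Q DR DQ br) (l : ℂ) (p : R × Q) (b : R) :
    Ω.toLCA.brE l p (b, 0) = (br l p.1 b + Ω.rt l p.2 b, Ω.lt l p.2 b) := by
  simp [toLCA, unifiedBracket, Ω.datum.lh_bilin.zero_right, Ω.datum.fm_bilin.zero_right,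
    Ω.datum.rh_bilin.zero_right, Ω.datum.bq_bilin.zero_right]

theorem toLCA_brE_fst_snd (Ω : ExtStruct R Q DR DQ br) (l : ℂ) (a : R) (y : Q) :
    Ω.toLCA.brE l (a, 0) (0, y) = (Ω.lh l a y, Ω.rh l a y) := by
  simp [toLCA_brE_fst_left, Ω.toLCA.isConformalBilin_bracket.zero_right]

theorem toLCA_brE_snd_fst (Ω : ExtStruct R Q DR DQ br) (l : ℂ) (x : Q) (b : R) :
    Ω.toLCA.brE l (0, x) (b, 0) = (Ω.rt l x b, Ω.lt l x b) := by
  simp [toLCA_brE_fst_right, Ω.toLCA.isConformalBilin_bracket.zero_left]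

theorem toLCA_brE_snd_snd (Ω : ExtStruct R Q DR DQ br) (l : ℂ) (x y : Q) :
    Ω.toLCA.brE l (0, x) (0, y) = (Ω.fm l x y, Ω.bq l x y) := by
  simp [toLCA, unifiedBracket, Ω.toLCA.isConformalBilin_bracket.zero_left,
    Ω.datum.lh_bilin.zero_left, Ω.datum.rt_bilin.zero_right, Ω.datum.rh_bilin.zero_left,
    Ω.datum.lt_bilin.zero_right]

theorem toExtStruct_toLCA (Ω : ExtStruct R Q DR DQ br) : Ω.toLCA.toExtStruct = Ω := by
  ext <;>
    simp [LCAOn.toExtStruct, toLCA_brE_fst_snd, toLCA_brE_snd_fst, toLCA_brE_snd_snd]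

/-- The unified product as a one-to-one correspondence between `TCL(R, Q)` and the Leibniz
conformal algebra structures on `R ⊕ Q` containing `R`. -/
def equivLCAOn : ExtStruct R Q DR DQ br ≃ LCAOn R Q DR DQ br where
  toFun := toLCA
  invFun := LCAOn.toExtStruct
  left_inv := toExtStruct_toLCA
  right_inv := LCAOn.toLCA_toExtStruct

theorem isBracketHom_shear_iff (Ω Ω' : ExtStruct R Q DR DQ br)
    (u : Q →ₗ[ℂ] R) (v : Q ≃ₗ[ℂ] Q) :
    IsBracketHom Ω.toLCA.brE Ω'.toLCA.brE (shear u v).toLinearMap ↔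
      (∀ l a y, Ω.lh l a y + u (Ω.rh l a y) = br l a (u y) + Ω'.lh l a (v y) ∧
        v (Ω.rh l a y) = Ω'.rh l a (v y)) ∧
      (∀ l x b, Ω.rt l x b + u (Ω.lt l x b) = br l (u x) b + Ω'.rt l (v x) b ∧
        v (Ω.lt l x b) = Ω'.lt l (v x) b) ∧
      ∀ l x y, Ω.fm l x y + u (Ω.bq l x y) = br l (u x) (u y) + Ω'.lh l (u x) (v y)
          + Ω'.rt l (v x) (u y) + Ω'.fm l (v x) (v y) ∧
        v (Ω.bq l x y) = Ω'.rh l (u x) (v y) + Ω'.lt l (v x) (u y) + Ω'.bq l (v x) (v y) := by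
  rw [LCAOn.isBracketHom_iff_of_stabilizesFst _ _ (stabilizesFst_shear u v)]
  simp only [toLCA_brE_fst_snd, toLCA_brE_snd_fst, toLCA_brE_snd_snd, LinearEquiv.coe_coe,
    shear_apply, zero_add]
  simp only [toLCA_brE_fst_left, toLCA_brE_fst_right]
  simp only [toLCA, unifiedBracket, Prod.mk.injEq]

theorem datumEquivVia_iff (Ω Ω' : ExtStruct R Q DR DQ br) (u : Q →ₗ[ℂ] R) (v : Q ≃ₗ[ℂ] Q) :
    DatumEquivVia DR DQ br Ω.lh Ω.rh Ω.lt Ω.rt Ω.fm Ω.bq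
        Ω'.lh Ω'.rh Ω'.lt Ω'.rt Ω'.fm Ω'.bq u v ↔
      PreservesD (LinearMap.prodMap DR DQ) (shear u v).toLinearMap ∧
      IsBracketHom Ω.toLCA.brE Ω'.toLCA.brE (shear u v).toLinearMap := by
  rw [preservesD_shear_iff, isBracketHom_shear_iff]
  simp only [DatumEquivVia, ← map_add, LinearEquiv.eq_symm_apply, eq_sub_iff_add_eq, forall_and]
  tauto

theorem extEquiv_iff_lcaEquiv (Ω Ω' : ExtStruct R Q DR DQ br) :
    extEquiv DR DQ br Ω Ω' ↔ lcaEquiv DR DQ br Ω.toLCA Ω'.toLCA := by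
  rw [lcaEquiv_iff_exists_shear]
  exact exists₂_congr (datumEquivVia_iff Ω Ω')

theorem extCohom_iff_lcaCohom (Ω Ω' : ExtStruct R Q DR DQ br) :
    extCohom DR DQ br Ω Ω' ↔ lcaCohom DR DQ br Ω.toLCA Ω'.toLCA := by
  rw [lcaCohom_iff_exists_shear_refl]
  exact exists_congr fun u => datumEquivVia_iff Ω Ω' u _

end ExtStruct

end Extensions

/-- The unified product construction induces bijections
`LH²_R(Q,R) = TCL(R,Q)/≡ → CExtd(E,R)` and `LH²(Q,R) = TCL(R,Q)/≈ → CExtd'(E,R)`. -/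
theorem classification_of_extending_structures
    {R Q : Type*} [AddCommGroup R] [Module ℂ R] [AddCommGroup Q] [Module ℂ Q]
    (DR : Module.End ℂ R) (DQ : Module.End ℂ Q)
    (br : ℂ → R → R → R) (hLeib : IsLeibnizConformal DR br) :
    (∃ F : Quot (extEquiv DR DQ br) → Quot (lcaEquiv DR DQ br),
      Function.Bijective F ∧
      ∀ Ω : ExtStruct R Q DR DQ br,
        F (Quot.mk (extEquiv DR DQ br) Ω) = Quot.mk (lcaEquiv DR DQ br) Ω.toLCA) ∧
    (∃ F : Quot (extCohom DR DQ br) → Quot (lcaCohom DR DQ br),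
      Function.Bijective F ∧
      ∀ Ω : ExtStruct R Q DR DQ br,
        F (Quot.mk (extCohom DR DQ br) Ω) = Quot.mk (lcaCohom DR DQ br) Ω.toLCA) := by
  exact ⟨⟨Quot.congr ExtStruct.equivLCAOn ExtStruct.extEquiv_iff_lcaEquiv,
      Equiv.bijective _, fun _ => rfl⟩,
    ⟨Quot.congr ExtStruct.equivLCAOn ExtStruct.extCohom_iff_lcaCohom,
      Equiv.bijective _, fun _ => rfl⟩⟩
end
end
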